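/- Let Γ be a finitely generated group and let ρ₁, ρ₂ : Γ → PSL(2,ℂ) be group homomorphisms, both irreducible, such that for every γ ∈ Γ and all matrices A₁, A₂ ∈ SL(2,ℂ) whose classes in PSL(2,ℂ) are ρ₁(γ) and ρ₂(γ) respectively, one has (tr A₁)² = (tr A₂)². Then ρ₁ and ρ₂ are conjugate: there exists C ∈ SL(2,ℂ) such that ρ₂(γ) = [C] · ρ₁(γ) · [C]⁻¹ for all γ ∈ Γ, where [C] is the class of C in PSL(2,ℂ). -/

import Mathlib

open Matrix

/-- `PSL(2,ℂ)`: the quotient of `SL(2,ℂ)` by its center `{I, −I}`. -/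
abbrev PSL2 : Type :=
  SpecialLinearGroup (Fin 2) ℂ ⧸ Subgroup.center (SpecialLinearGroup (Fin 2) ℂ)

/-- The canonical projection `SL(2,ℂ) → PSL(2,ℂ)`, `A ↦ [A]`. -/
abbrev pslProj : SpecialLinearGroup (Fin 2) ℂ →* PSL2 :=
  QuotientGroup.mk' (Subgroup.center (SpecialLinearGroup (Fin 2) ℂ))

/-- A homomorphism `ρ : Γ → PSL(2,ℂ)` is irreducible if there is no nonzero `v ∈ ℂ²`
such that every lift to `SL(2,ℂ)` of every `ρ(γ)` preserves the line `ℂ·v`. -/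
def IsIrreduciblePSL {Γ : Type*} [Group Γ] (ρ : Γ →* PSL2) : Prop :=
  ¬ ∃ v : Fin 2 → ℂ, v ≠ 0 ∧ ∀ γ : Γ, ∀ A : SpecialLinearGroup (Fin 2) ℂ,
      pslProj A = ρ γ → ∃ c : ℂ, (A : Matrix (Fin 2) (Fin 2) ℂ) *ᵥ v = c • v

namespace PSLaux

abbrev SL := SpecialLinearGroup (Fin 2) ℂ
abbrev M2 := Matrix (Fin 2) (Fin 2) ℂ

theorem burnside {V : Type*} [AddCommGroup V] [Module ℂ V] [FiniteDimensional ℂ V] [Nontrivial V]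
    (S : Subalgebra ℂ (Module.End ℂ V))
    (h : ∀ W : Submodule ℂ V, (∀ f ∈ S, ∀ w ∈ W, f w ∈ W) → W = ⊥ ∨ W = ⊤) : S = ⊤ := by
  have : IsSimpleModule S V := by
    rw [isSimpleModule_iff]
    refine { eq_bot_or_eq_top := ?_, exists_pair_ne := ⟨⊥, ⊤, bot_ne_top⟩ }
    intro W
    have := h (W.restrictScalars ℂ) (fun f hf w hw => W.smul_mem ⟨f, hf⟩ hw)
    simpa using this
  rw [eq_top_iff]
  intro f _
  classical
  let b := Module.finBasis ℂ V
  have key : ∀ e : Module.End S V, ∃ c : ℂ, ∀ v, e v = c • v := by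
    intro e
    obtain ⟨c, hc⟩ := Module.End.exists_eigenvalue (e.restrictScalars ℂ : Module.End ℂ V)
    obtain ⟨v, hv⟩ := hc.exists_hasEigenvector
    refine ⟨c, ?_⟩
    have hv1 : e v = c • v := hv.apply_eq_smul
    have hv0 := hv.2
    have : IsSimpleModule S V := inferInstance
    intro w
    obtain ⟨⟨g, hg⟩, hgv⟩ := IsSimpleModule.toSpanSingleton_surjective S hv0 w
    rw [LinearMap.toSpanSingleton_apply] at hgv
    rw [← hgv, map_smul, hv1]
    exact map_smul g c v
  let F : Module.End (Module.End S V) V :=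
    { toFun := f, map_add' := f.map_add, map_smul' := by
        intro e v
        obtain ⟨c, hc⟩ := key e
        simp [hc] }
  obtain ⟨r, hr⟩ := jacobson_density (R := S) F (Finset.univ.image b)
  have : f = r.1 := by
    apply b.ext
    intro i
    exact hr (b i) (by simp)
  rw [this]; exact r.2

/-- equality of classes -/
theorem proj_eq_iff (A B : SL) :
    pslProj A = pslProj B ↔ ∃ s : ℂ, s ^ 2 = 1 ∧ (A : M2) = s • (B : M2) := by
  rw [QuotientGroup.mk'_apply, QuotientGroup.mk'_apply, eq_comm, QuotientGroup.eq,
    Matrix.SpecialLinearGroup.mem_center_iff]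
  constructor
  · rintro ⟨r, hr, h⟩
    refine ⟨r, by simpa using hr, ?_⟩
    have : A = B * (B⁻¹ * A) := by simp
    rw [this, Matrix.SpecialLinearGroup.coe_mul, ← h]
    simp [← Matrix.smul_one_eq_diagonal]
  · rintro ⟨s, hs, h⟩
    refine ⟨s, by simpa using hs, ?_⟩
    rw [Matrix.SpecialLinearGroup.coe_mul, h]
    have : (B⁻¹ : SL).1 * B.1 = 1 := by
      rw [← Matrix.SpecialLinearGroup.coe_mul]; simp
    rw [Matrix.mul_smul, this]
    simp [← Matrix.smul_one_eq_diagonal]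

def PR {Γ : Type*} [Group Γ] (B : Γ → SL) : Prop :=
  ∀ γ δ, ∃ s : ℂ, s ^ 2 = 1 ∧ (B (γ * δ) : M2) = s • ((B γ : M2) * (B δ : M2))

def Irr {Γ : Type*} [Group Γ] (B : Γ → SL) : Prop :=
  ¬ ∃ v : Fin 2 → ℂ, v ≠ 0 ∧ ∀ γ : Γ, ∃ c : ℂ, (B γ : M2) *ᵥ v = c • v

/-- adjoint matrix -/
def R (A : M2) : Matrix (Fin 3) (Fin 3) ℂ :=
  !![A 0 0 * A 1 1 + A 0 1 * A 1 0, - (A 0 0 * A 1 0), A 0 1 * A 1 1;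
     -2 * A 0 0 * A 0 1, A 0 0 ^ 2, - A 0 1 ^ 2;
     2 * A 1 0 * A 1 1, - A 1 0 ^ 2, A 1 1 ^ 2]

noncomputable def J : Matrix (Fin 3) (Fin 3) ℂ := !![2, 0, 0; 0, 0, 1; 0, 1, 0]
noncomputable def J' : Matrix (Fin 3) (Fin 3) ℂ := !![1/2, 0, 0; 0, 0, 1; 0, 1, 0]

theorem J'_J : J' * J = 1 := by
  ext i j; fin_cases i <;> fin_cases j <;> simp [J, J', Matrix.mul_apply, Fin.sum_univ_three]

theorem J_J' : J * J' = 1 := by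
  ext i j; fin_cases i <;> fin_cases j <;> simp [J, J', Matrix.mul_apply, Fin.sum_univ_three]

def X (u : Fin 3 → ℂ) : M2 := !![u 0, u 1; u 2, - u 0]

theorem R_mul (A B : M2) : R (A * B) = R A * R B := by
  ext i j; fin_cases i <;> fin_cases j <;>
    simp [R, Matrix.mul_apply, Fin.sum_univ_three] <;> ring

theorem R_smul (s : ℂ) (A : M2) : R (s • A) = s ^ 2 • R A := by
  ext i j; fin_cases i <;> fin_cases j <;> simp [R] <;> ring

theorem R_one : R 1 = 1 := by
  ext i j; fin_cases i <;> fin_cases j <;> simp [R]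

theorem R_J (A : M2) : (R A)ᵀ * J * R A = A.det ^ 2 • J := by
  ext i j; fin_cases i <;> fin_cases j <;>
    simp [R, J, Matrix.mul_apply, Fin.sum_univ_three, Matrix.det_fin_two] <;> ring

theorem R_trace (A : M2) : (R A).trace = A.trace ^ 2 - A.det := by
  simp [R, Matrix.trace, Fin.sum_univ_three, Fin.sum_univ_two, Matrix.det_fin_two]; ring

theorem X_R (A : M2) (u : Fin 3 → ℂ) : X (R A *ᵥ u) * A = A.det • (A * X u) := by
  ext i j; fin_cases i <;> fin_cases j <;>
    simp [R, X, Matrix.mul_apply, Fin.sum_univ_three, Matrix.det_fin_two, Matrix.mulVec, dotProduct] <;> ring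

theorem R_inj_one (A : M2) (h : R A = 1) : ∃ s : ℂ, s ^ 2 = 1 ∧ A = s • (1 : M2) := by
  have h0 : A 0 0 ^ 2 = 1 := by simpa [R] using congrFun (congrFun h 1) 1
  have h1 : A 0 1 = 0 := by simpa [R] using congrFun (congrFun h 1) 2
  have h2 : A 1 0 = 0 := by simpa [R] using congrFun (congrFun h 2) 1
  have h3 : A 0 0 * A 1 1 + A 0 1 * A 1 0 = 1 := by simpa [R] using congrFun (congrFun h 0) 0
  rw [h1, zero_mul, add_zero] at h3
  refine ⟨A 0 0, h0, ?_⟩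
  have h4 : A 1 1 = A 0 0 := by linear_combination (-A 1 1) * h0 + A 0 0 * h3
  ext i j; fin_cases i <;> fin_cases j <;> simp [h1, h2, h4]

/-- Common eigenvector from a singular semi-commuting matrix. -/
theorem singular_red {Γ : Type*} [Group Γ] (B : Γ → SL) (hI : Irr B) (N : M2) (hN : N ≠ 0)
    (hd : N.det = 0) (h : ∀ γ, ∃ c : ℂ, c ≠ 0 ∧ (B γ : M2) * N = c • (N * (B γ : M2))) : False := by
  obtain ⟨v, hv, hv0⟩ := Matrix.exists_mulVec_eq_zero_iff.mpr hd
  apply hI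
  refine ⟨v, hv, fun γ => ?_⟩
  obtain ⟨c, hc, e⟩ := h γ
  have e1 : N *ᵥ ((B γ : M2) *ᵥ v) = 0 := by
    have : ((B γ : M2) * N) *ᵥ v = 0 := by rw [← Matrix.mulVec_mulVec, hv0, Matrix.mulVec_zero]
    rw [e, Matrix.smul_mulVec, ← Matrix.mulVec_mulVec] at this
    exact (smul_eq_zero.mp this).resolve_left hc
  generalize (B γ : M2) *ᵥ v = w at e1
  have a0 := congrFun hv0 0
  have a1 := congrFun hv0 1
  have b0 := congrFun e1 0
  have b1 := congrFun e1 1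
  simp [Matrix.mulVec, dotProduct, Fin.sum_univ_two] at a0 a1 b0 b1
  have cr : v 0 * w 1 = v 1 * w 0 := by
    by_contra hne
    apply hN
    have hne' : v 0 * w 1 - v 1 * w 0 ≠ 0 := sub_ne_zero.mpr hne
    ext i j
    fin_cases i <;> fin_cases j <;> simp <;> apply (mul_eq_zero.mp ?_).resolve_right hne'
    · linear_combination w 1 * a0 - v 1 * b0
    · linear_combination v 0 * b0 - w 0 * a0
    · linear_combination w 1 * a1 - v 1 * b1
    · linear_combination v 0 * b1 - w 0 * a1
  by_cases h0 : v 0 = 0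
  · have h1 : v 1 ≠ 0 := by
      intro h1; apply hv; ext i; fin_cases i <;> simp [h0, h1]
    refine ⟨w 1 / v 1, ?_⟩
    ext i; fin_cases i
    · simp [h0]
      have : v 1 * w 0 = 0 := by rw [← cr, h0, zero_mul]
      exact (mul_eq_zero.mp this).resolve_left h1
    · simp [h1]
  · refine ⟨w 0 / v 0, ?_⟩
    ext i; fin_cases i
    · simp [h0]
    · simp; field_simp; linear_combination cr

theorem conj_of_surj {Γ : Type*} [Group Γ] {V : Type*} [AddCommGroup V] [Module ℂ V]
    [FiniteDimensional ℂ V] (r₁ r₂ : Γ →* Module.End ℂ V)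
    (htr : ∀ γ, LinearMap.trace ℂ V (r₁ γ) = LinearMap.trace ℂ V (r₂ γ))
    (hs : Function.Surjective (MonoidAlgebra.lift ℂ (Module.End ℂ V) Γ r₁)) :
    Function.Surjective (MonoidAlgebra.lift ℂ (Module.End ℂ V) Γ r₂) ∧
    ∃ T : V ≃ₗ[ℂ] V, ∀ γ, r₂ γ = T.toLinearMap ∘ₗ r₁ γ ∘ₗ T.symm.toLinearMap := by
  set p₁ := MonoidAlgebra.lift ℂ (Module.End ℂ V) Γ r₁ with hp₁
  set p₂ := MonoidAlgebra.lift ℂ (Module.End ℂ V) Γ r₂ with hp₂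
  have htr' : ∀ x, LinearMap.trace ℂ V (p₁ x) = LinearMap.trace ℂ V (p₂ x) := by
    intro x
    induction x using MonoidAlgebra.induction_on with
    | of γ => simpa [hp₁, hp₂] using htr γ
    | add x y hx hy => simp [hx, hy]
    | smul c x hx => simp [hx]
  have hker : ∀ x, p₂ x = 0 → p₁ x = 0 := by
    intro x hx
    have h1 : ∀ f : Module.End ℂ V, LinearMap.trace ℂ V (p₁ x * f) = 0 := by
      intro f
      obtain ⟨y, rfl⟩ := hs f
      rw [← map_mul, htr', map_mul, hx, zero_mul, map_zero]
    ext v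
    by_contra hne
    simp only [LinearMap.zero_apply] at hne
    obtain ⟨d, hd⟩ := Module.Projective.exists_dual_ne_zero ℂ hne
    have := h1 (LinearMap.smulRight d v)
    apply hd
    have e : p₁ x * LinearMap.smulRight d v = LinearMap.smulRight d (p₁ x v) := by
      ext w; simp
    rw [e] at this
    simpa using this
  -- linear section comparison
  have hdim : Function.Surjective p₂ := by
    have hle : LinearMap.ker p₂.toLinearMap ≤ LinearMap.ker p₁.toLinearMap := fun x hx => hker x hx
    rw [← AlgHom.coe_toLinearMap, ← LinearMap.range_eq_top]
    apply Submodule.eq_top_of_finrank_eq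
    apply le_antisymm (Submodule.finrank_le _)
    -- map range p₂ → range p₁
    have e := p₂.toLinearMap.quotKerEquivRange
    have hfin : Module.Finite ℂ (MonoidAlgebra ℂ Γ ⧸ LinearMap.ker p₂.toLinearMap) :=
      Module.Finite.equiv e.symm
    rw [← e.finrank_eq]
    apply LinearMap.finrank_le_finrank_of_surjective
      (f := (LinearMap.ker p₂.toLinearMap).liftQ p₁.toLinearMap hle)
    intro f
    obtain ⟨x, rfl⟩ := hs f
    exact ⟨Submodule.Quotient.mk x, by simp⟩
  refine ⟨hdim, ?_⟩
  let q : (MonoidAlgebra ℂ Γ ⧸ RingHom.ker p₂) →ₐ[ℂ] Module.End ℂ V :=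
    Ideal.Quotient.liftₐ (RingHom.ker p₂) p₁ (fun x hx => hker x hx)
  let e₂ := Ideal.quotientKerAlgEquivOfSurjective hdim
  let g : Module.End ℂ V →ₐ[ℂ] Module.End ℂ V := q.comp e₂.symm.toAlgHom
  have hg : ∀ x, g (p₂ x) = p₁ x := by
    intro x
    have : e₂.symm (p₂ x) = Ideal.Quotient.mk _ x := by
      rw [AlgEquiv.symm_apply_eq]; rfl
    show q (e₂.symm (p₂ x)) = p₁ x
    rw [this]; rfl
  have gs : Function.Surjective g := by
    intro f
    obtain ⟨x, rfl⟩ := hs f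
    exact ⟨_, hg x⟩
  have gi : Function.Injective g := by
    have := (LinearMap.injective_iff_surjective (f := g.toLinearMap)).mpr gs
    exact this
  obtain ⟨T, hT⟩ := (AlgEquiv.ofBijective g ⟨gi, gs⟩).symm.eq_linearEquivConjAlgEquiv
  refine ⟨T, fun γ => ?_⟩
  have h1 : g (r₂ γ) = r₁ γ := by simpa [hp₁, hp₂] using hg (MonoidAlgebra.of ℂ Γ γ)
  have h2 : (AlgEquiv.ofBijective g ⟨gi, gs⟩).symm (r₁ γ) = r₂ γ := by
    rw [AlgEquiv.symm_apply_eq]; exact h1.symm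
  rw [← h2, hT, LinearEquiv.conjAlgEquiv_apply]

/-- The algebra map of `M₂` attached to an isometry of determinant one. -/
theorem so3_lift (g : Matrix (Fin 3) (Fin 3) ℂ) (hJ : gᵀ * J * g = J) (hd : g.det = 1) :
    ∃ C : SL, ∀ u, X (g *ᵥ u) * (C : M2) = (C : M2) * X u := by
  have hadj : g.adjugate = J' * gᵀ * J := by
    have h1 : (J' * gᵀ * J) * g = 1 := by
      rw [Matrix.mul_assoc, Matrix.mul_assoc, ← Matrix.mul_assoc gᵀ, hJ, J'_J]
    have h2 : g * g.adjugate = 1 := by rw [Matrix.mul_adjugate, hd, one_smul]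
    exact (left_inv_eq_right_inv h1 h2).symm
  have A := fun i j => congrFun (congrFun hadj i) j
  have Q := fun i j => congrFun (congrFun hJ i) j
  have A00 := A 0 0
  have A01 := A 0 1
  have A02 := A 0 2
  have A10 := A 1 0
  have A11 := A 1 1
  have A12 := A 1 2
  have A20 := A 2 0
  have A21 := A 2 1
  have A22 := A 2 2
  have Q00 := Q 0 0
  have Q01 := Q 0 1
  have Q02 := Q 0 2
  have Q11 := Q 1 1
  have Q12 := Q 1 2
  have Q22 := Q 2 2
  clear A Q
  simp [Matrix.adjugate_fin_three, J, J', Matrix.mul_apply, Fin.sum_univ_three, Matrix.vecMul, dotProduct] at A00 A01 A02 A10 A11 A12 A20 A21 A22 Q00 Q01 Q02 Q11 Q12 Q22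
  have hXX : ∀ u v : Fin 3 → ℂ, X u * X v = (u 0 * v 0 + (u 1 * v 2 + u 2 * v 1) / 2) • (1 : M2)
      + X ![(u 1 * v 2 - u 2 * v 1) / 2, u 0 * v 1 - u 1 * v 0, u 2 * v 0 - u 0 * v 2] := by
    intro u v
    ext i j; fin_cases i <;> fin_cases j <;> simp [X, Matrix.mul_apply, Fin.sum_univ_two] <;> ring
  have hXg : ∀ u v : Fin 3 → ℂ, X (g *ᵥ u) * X (g *ᵥ v) =
      (u 0 * v 0 + (u 1 * v 2 + u 2 * v 1) / 2) • (1 : M2)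
      + X (g *ᵥ ![(u 1 * v 2 - u 2 * v 1) / 2, u 0 * v 1 - u 1 * v 0, u 2 * v 0 - u 0 * v 2]) := by
    intro u v
    have e : ∀ x : Fin 3 → ℂ, ∀ i, (g *ᵥ x) i = g i 0 * x 0 + g i 1 * x 1 + g i 2 * x 2 := by
      intro x i; simp [Matrix.mulVec, dotProduct, Fin.sum_univ_three]
    rw [hXX]
    congr 2
    · simp only [e]
      linear_combination (1/2) * (u 0 * v 0 * Q00 + (u 0 * v 1 + u 1 * v 0) * Q01
        + (u 0 * v 2 + u 2 * v 0) * Q02 + u 1 * v 1 * Q11 + (u 1 * v 2 + u 2 * v 1) * Q12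
        + u 2 * v 2 * Q22)
    · ext i; fin_cases i <;> simp only [e] <;> simp
      · linear_combination (1/2) * ((u 1 * v 2 - u 2 * v 1) * A00 + (u 2 * v 0 - u 0 * v 2) * A10
          + (u 0 * v 1 - u 1 * v 0) * A20)
      · linear_combination ((u 1 * v 2 - u 2 * v 1) * A02 + (u 2 * v 0 - u 0 * v 2) * A12
          + (u 0 * v 1 - u 1 * v 0) * A22)
      · linear_combination ((u 1 * v 2 - u 2 * v 1) * A01 + (u 2 * v 0 - u 0 * v 2) * A11
          + (u 0 * v 1 - u 1 * v 0) * A21)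
  clear A00 A01 A02 A10 A11 A12 A20 A21 A22 Q00 Q01 Q02 Q11 Q12 Q22 hadj
  obtain ⟨φ, φ1, φX⟩ : ∃ φ : M2 →ₗ[ℂ] M2, φ 1 = 1 ∧ ∀ u, φ (X u) = X (g *ᵥ u) := by
    let t : M2 → ℂ := fun m => (m 0 0 + m 1 1) / 2
    let w : M2 → Fin 3 → ℂ := fun m => ![(m 0 0 - m 1 1) / 2, m 0 1, m 1 0]
    refine ⟨
      { toFun := fun m => t m • (1 : M2) + X (g *ᵥ w m)
        map_add' := by
          intro m n
          ext i j; fin_cases i <;> fin_cases j <;>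
            simp [t, w, X, Matrix.mulVec, dotProduct, Fin.sum_univ_three] <;> ring
        map_smul' := by
          intro c m
          ext i j; fin_cases i <;> fin_cases j <;>
            simp [t, w, X, Matrix.mulVec, dotProduct, Fin.sum_univ_three] <;> ring }, ?_, ?_⟩
    · ext i j; fin_cases i <;> fin_cases j <;>
          simp [t, w, X, Matrix.mulVec, dotProduct, Fin.sum_univ_three]
    · intro u
      ext i j; fin_cases i <;> fin_cases j <;>
          simp [t, w, X, Matrix.mulVec, dotProduct, Fin.sum_univ_three]
  have φmul : ∀ m n, φ (m * n) = φ m * φ n := by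
    have dec : ∀ m : M2, ∃ (t : ℂ) (u : Fin 3 → ℂ), m = t • (1 : M2) + X u := by
      intro m
      refine ⟨(m 0 0 + m 1 1) / 2, ![(m 0 0 - m 1 1) / 2, m 0 1, m 1 0], ?_⟩
      ext i j; fin_cases i <;> fin_cases j <;> simp [X] <;> ring
    intro m n
    obtain ⟨t, u, rfl⟩ := dec m
    obtain ⟨t', u', rfl⟩ := dec n
    have h1 : φ (X u * X u') = φ (X u) * φ (X u') := by
      rw [φX, φX, hXg, hXX, map_add, map_smul, φ1, φX]
    simp only [add_mul, mul_add, smul_mul_assoc, mul_smul_comm, one_mul, mul_one, map_add, map_smul,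
      φ1, h1]
  let Φ : M2 →ₐ[ℂ] M2 := AlgHom.ofLinearMap φ φ1 φmul
  have gi : Function.Injective Φ := RingHom.injective Φ.toRingHom
  have gs : Function.Surjective Φ := (LinearMap.injective_iff_surjective (f := Φ.toLinearMap)).mp gi
  let E := (AlgEquiv.ofBijective Φ ⟨gi, gs⟩)
  obtain ⟨T, hT⟩ := ((Matrix.toLinAlgEquiv' (R := ℂ) (n := Fin 2)).symm.trans (E.trans Matrix.toLinAlgEquiv')).eq_linearEquivConjAlgEquiv
  let P : M2 := LinearMap.toMatrix' T.toLinearMap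
  have hP : P.det ≠ 0 := by
    have : P * LinearMap.toMatrix' T.symm.toLinearMap = 1 := by
      rw [← LinearMap.toMatrix'_comp]; simp
    intro h0
    have := congrArg Matrix.det this
    simp [h0] at this
  have hPm : ∀ m, φ m * P = P * m := by
    intro m
    have := congrArg (fun f => f (Matrix.toLinAlgEquiv' m)) hT
    simp only [AlgEquiv.trans_apply, AlgEquiv.symm_apply_apply, LinearEquiv.conjAlgEquiv_apply] at this
    have h2 : Matrix.toLin' (φ m) ∘ₗ T.toLinearMap = T.toLinearMap ∘ₗ Matrix.toLin' m := by
      have h3 : Matrix.toLin' (φ m) = T.toLinearMap ∘ₗ Matrix.toLin' m ∘ₗ T.symm.toLinearMap := this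
      rw [h3]; ext; simp
    have h4 := congrArg LinearMap.toMatrix' h2
    simpa [LinearMap.toMatrix'_comp, P] using h4
  obtain ⟨s, hs⟩ := IsAlgClosed.exists_pow_nat_eq P.det (n := 2) (by norm_num)
  have hs0 : s ≠ 0 := by
    rintro rfl; apply hP; rw [← hs]; simp
  refine ⟨⟨s⁻¹ • P, ?_⟩, fun u => ?_⟩
  · rw [Matrix.det_smul, ← hs]; simp [hs0]
  · show X (g *ᵥ u) * (s⁻¹ • P) = (s⁻¹ • P) * X u
    rw [← φX, mul_smul_comm, hPm, smul_mul_assoc]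

def homOf {Γ : Type*} [Group Γ] (B : Γ → SL) (hB : PR B) : Γ →* PSL2 :=
  MonoidHom.mk' (fun γ => pslProj (B γ)) (by
    intro γ δ
    rw [← map_mul, proj_eq_iff]
    simpa using hB γ δ)

theorem PR_one {Γ : Type*} [Group Γ] (B : Γ → SL) (hB : PR B) :
    ∃ s : ℂ, s ^ 2 = 1 ∧ (B 1 : M2) = s • (1 : M2) := by
  have h : pslProj (B 1) = pslProj 1 := by
    have := (homOf B hB).map_one
    rw [map_one]; exact this
  simpa using (proj_eq_iff _ _).mp h

theorem SL_det (A : SL) : (A : M2).det = 1 := A.2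

theorem R_PR {Γ : Type*} [Group Γ] (B : Γ → SL) (hB : PR B) (γ δ : Γ) :
    R (B (γ * δ) : M2) = R (B γ : M2) * R (B δ : M2) := by
  obtain ⟨s, hs, h⟩ := hB γ δ
  rw [h, R_smul, hs, one_smul, R_mul]

theorem R_PR_one {Γ : Type*} [Group Γ] (B : Γ → SL) (hB : PR B) : R (B 1 : M2) = 1 := by
  obtain ⟨s, hs, h⟩ := PR_one B hB
  rw [h, R_smul, hs, one_smul, R_one]

noncomputable def rho3 {Γ : Type*} [Group Γ] (B : Γ → SL) (hB : PR B) : Γ →* Module.End ℂ (Fin 3 → ℂ) where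
  toFun γ := Matrix.toLin' (R (B γ : M2))
  map_one' := by rw [R_PR_one B hB, Matrix.toLin'_one]; rfl
  map_mul' γ δ := by rw [R_PR B hB, Matrix.toLin'_mul]; rfl

theorem R_SL_J (A : SL) : (R (A : M2))ᵀ * J * R (A : M2) = J := by
  rw [R_J, SL_det]; simp

theorem R_inj (A B : SL) (h : R (A : M2) = R (B : M2)) :
    ∃ s : ℂ, s ^ 2 = 1 ∧ (A : M2) = s • (B : M2) := by
  have h1 : R ((B⁻¹ * A : SL) : M2) = 1 := by
    rw [Matrix.SpecialLinearGroup.coe_mul, R_mul, h, ← R_mul, ← Matrix.SpecialLinearGroup.coe_mul]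
    simp [R_one]
  obtain ⟨s, hs, e⟩ := R_inj_one _ h1
  refine ⟨s, hs, ?_⟩
  have : A = B * (B⁻¹ * A) := by simp
  rw [this, Matrix.SpecialLinearGroup.coe_mul, e]
  simp

theorem X_inj (u v : Fin 3 → ℂ) (h : X u = X v) : u = v := by
  ext i; fin_cases i
  · simpa [X] using congrFun (congrFun h 0) 0
  · simpa [X] using congrFun (congrFun h 0) 1
  · simpa [X] using congrFun (congrFun h 1) 0

theorem SL_cancel (A : SL) (M N : M2) (h : M * (A : M2) = N * (A : M2)) : M = N := by
  have e : (A : M2) * ((A⁻¹ : SL) : M2) = 1 := by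
    rw [← Matrix.SpecialLinearGroup.coe_mul]; simp
  calc M = M * (A : M2) * ((A⁻¹ : SL) : M2) := by rw [Matrix.mul_assoc, e, Matrix.mul_one]
    _ = N := by rw [h, Matrix.mul_assoc, e, Matrix.mul_one]

theorem case1 {Γ : Type*} [Group Γ] (B₁ B₂ : Γ → SL) (h₁ : PR B₁) (h₂ : PR B₂)
    (T : (Fin 3 → ℂ) ≃ₗ[ℂ] (Fin 3 → ℂ))
    (hT : ∀ γ, rho3 B₂ h₂ γ = T.toLinearMap ∘ₗ rho3 B₁ h₁ γ ∘ₗ T.symm.toLinearMap)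
    (hs : Function.Surjective (MonoidAlgebra.lift ℂ (Module.End ℂ (Fin 3 → ℂ)) Γ (rho3 B₁ h₁))) :
    ∃ C : SL, ∀ γ, ∃ s : ℂ, s ^ 2 = 1 ∧ (B₂ γ : M2) * (C : M2) = s • ((C : M2) * (B₁ γ : M2)) := by
  obtain ⟨g, hg⟩ : ∃ g, g = LinearMap.toMatrix' T.toLinearMap := ⟨_, rfl⟩
  have hgR : ∀ γ, R (B₂ γ : M2) * g = g * R (B₁ γ : M2) := by
    intro γ
    have h2 : rho3 B₂ h₂ γ ∘ₗ T.toLinearMap = T.toLinearMap ∘ₗ rho3 B₁ h₁ γ := by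
      rw [hT]; ext; simp
    have h4 := congrArg LinearMap.toMatrix' h2
    rw [hg]
    simpa [LinearMap.toMatrix'_comp, rho3] using h4
  have hdet : g.det ≠ 0 := by
    have : g * LinearMap.toMatrix' T.symm.toLinearMap = 1 := by
      rw [hg, ← LinearMap.toMatrix'_comp]; simp
    intro h0
    have := congrArg Matrix.det this
    simp [h0] at this
  clear hT hg
  obtain ⟨N, hN⟩ : ∃ N, N = gᵀ * J * g := ⟨_, rfl⟩
  have hNR : ∀ γ, (R (B₁ γ : M2))ᵀ * N * R (B₁ γ : M2) = N := by
    intro γ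
    calc (R (B₁ γ : M2))ᵀ * N * R (B₁ γ : M2)
        = (g * R (B₁ γ : M2))ᵀ * J * (g * R (B₁ γ : M2)) := by
          rw [hN, Matrix.transpose_mul]; simp only [Matrix.mul_assoc]
      _ = gᵀ * ((R (B₂ γ : M2))ᵀ * J * R (B₂ γ : M2)) * g := by
          rw [← hgR, Matrix.transpose_mul]; simp only [Matrix.mul_assoc]
      _ = N := by rw [R_SL_J, hN]
  obtain ⟨K, hK⟩ : ∃ K, K = J' * N := ⟨_, rfl⟩
  have hJK : J * K = N := by rw [hK, ← Matrix.mul_assoc, J_J', Matrix.one_mul]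
  have hKR : ∀ γ, R (B₁ γ : M2) * K = K * R (B₁ γ : M2) := by
    intro γ
    have e1 : (J' * (R (B₁ γ : M2))ᵀ * J) * R (B₁ γ : M2) = 1 := by
      rw [Matrix.mul_assoc, Matrix.mul_assoc, ← Matrix.mul_assoc _ J, R_SL_J, J'_J]
    have e2 := mul_eq_one_comm.mp e1
    have e3 : K = (J' * (R (B₁ γ : M2))ᵀ * J) * (K * R (B₁ γ : M2)) := by
      calc K = J' * ((R (B₁ γ : M2))ᵀ * N * R (B₁ γ : M2)) := by rw [hNR, hK]
        _ = _ := by rw [← hJK]; simp only [Matrix.mul_assoc]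
    calc R (B₁ γ : M2) * K
        = (R (B₁ γ : M2) * (J' * (R (B₁ γ : M2))ᵀ * J)) * (K * R (B₁ γ : M2)) := by
          rw [Matrix.mul_assoc, ← e3]
      _ = _ := by rw [e2, Matrix.one_mul]
  have hKall : ∀ f : Module.End ℂ (Fin 3 → ℂ), f * Matrix.toLin' K = Matrix.toLin' K * f := by
    intro f
    obtain ⟨x, rfl⟩ := hs f
    induction x using MonoidAlgebra.induction_on with
    | of γ =>
      have := congrArg Matrix.toLin' (hKR γ)
      rw [Matrix.toLin'_mul, Matrix.toLin'_mul] at this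
      simpa [rho3] using! this
    | add x y hx hy => rw [map_add, add_mul, mul_add, hx, hy]
    | smul c x hx => rw [map_smul, smul_mul_assoc, mul_smul_comm, hx]
  obtain ⟨c, hc⟩ : K ∈ Set.range (Matrix.scalar (Fin 3)) := by
    apply Matrix.mem_range_scalar_of_commute_single
    intro i j _
    have := hKall (Matrix.toLin' (Matrix.single i j 1))
    have h2 := congrArg LinearMap.toMatrix' this
    rw [Module.End.mul_eq_comp, Module.End.mul_eq_comp, LinearMap.toMatrix'_comp, LinearMap.toMatrix'_comp] at h2
    simpa using! h2
  have hNc : gᵀ * J * g = c • J := by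
    rw [← hN, ← hJK, ← hc]
    ext i j; simp [mul_comm]
  have hJd : J.det ≠ 0 := by
    intro h0
    have := congrArg Matrix.det J_J'
    simp [h0] at this
  have hc0 : c ≠ 0 := by
    rintro rfl
    have := congrArg Matrix.det hNc
    rw [zero_smul, Matrix.det_mul, Matrix.det_mul, Matrix.det_transpose, Matrix.det_zero] at this
    simp [hdet, hJd] at this
  obtain ⟨s, hs⟩ := IsAlgClosed.exists_pow_nat_eq c (n := 2) (by norm_num)
  have hs0 : s ≠ 0 := by
    rintro rfl; apply hc0; rw [← hs]; simp
  obtain ⟨d, hd⟩ : ∃ d, d = (s⁻¹ • g).det := ⟨_, rfl⟩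
  have hJ1 : (s⁻¹ • g)ᵀ * J * (s⁻¹ • g) = J := by
    rw [Matrix.transpose_smul, smul_mul_assoc, smul_mul_assoc, mul_smul_comm, hNc, ← hs, smul_smul,
      smul_smul]
    field_simp; simp
  have hd2 : d ^ 2 = 1 := by
    have := congrArg Matrix.det hJ1
    rw [Matrix.det_mul, Matrix.det_mul, Matrix.det_transpose, ← hd] at this
    apply mul_right_cancel₀ hJd
    linear_combination this
  obtain ⟨C, hC⟩ := so3_lift (d • s⁻¹ • g) (by
      rw [Matrix.transpose_smul, smul_mul_assoc, smul_mul_assoc, mul_smul_comm, hJ1, smul_smul, ← pow_two, hd2, one_smul])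
    (by rw [Matrix.det_smul, ← hd]; simp; linear_combination (d^2+1) * hd2)
  have hRC : R (C : M2) = d • s⁻¹ • g := by
    apply Matrix.toLin'.injective
    apply LinearMap.ext
    intro u
    rw [Matrix.toLin'_apply, Matrix.toLin'_apply]
    apply X_inj
    apply SL_cancel C
    rw [X_R, hC, SL_det, one_smul]
  refine ⟨C, fun γ => ?_⟩
  have := R_inj (B₂ γ * C) (C * B₁ γ) (by
    rw [Matrix.SpecialLinearGroup.coe_mul, Matrix.SpecialLinearGroup.coe_mul, R_mul, R_mul, hRC]
    simp only [mul_smul_comm, smul_mul_assoc, hgR])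
  simpa using this

theorem exists_fixed_line {Γ : Type*} [Group Γ] (B : Γ → SL) (hB : PR B)
    (hs : ¬ Function.Surjective (MonoidAlgebra.lift ℂ (Module.End ℂ (Fin 3 → ℂ)) Γ (rho3 B hB))) :
    ∃ u : Fin 3 → ℂ, u ≠ 0 ∧ ∀ γ, ∃ c : ℂ, R (B γ : M2) *ᵥ u = c • u := by
  obtain ⟨W, hW, hb, ht⟩ : ∃ W : Submodule ℂ (Fin 3 → ℂ),
      (∀ γ, ∀ w ∈ W, R (B γ : M2) *ᵥ w ∈ W) ∧ W ≠ ⊥ ∧ W ≠ ⊤ := by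
    by_contra hcon
    push Not at hcon
    apply hs
    rw [← AlgHom.range_eq_top]
    apply burnside
    intro W hW
    by_contra h
    push Not at h
    apply h.2
    apply hcon W _ h.1
    intro γ w hw
    exact hW (Matrix.toLin' (R (B γ : M2))) ⟨MonoidAlgebra.of ℂ Γ γ, by simp [rho3]⟩ w hw
  have f3 : Module.finrank ℂ (Fin 3 → ℂ) = 3 := by simp
  have hlt := Submodule.finrank_lt ht
  have hpos : 0 < Module.finrank ℂ W := Nat.pos_of_ne_zero (fun h => hb (Submodule.finrank_eq_zero.mp h))
  rw [f3] at hlt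
  by_cases h1 : Module.finrank ℂ W = 1
  · obtain ⟨⟨u, hu⟩, hu0, hall⟩ := finrank_eq_one_iff'.mp h1
    refine ⟨u, fun h => hu0 (Subtype.ext h), fun γ => ?_⟩
    obtain ⟨c, hc⟩ := hall ⟨_, hW γ u hu⟩
    exact ⟨c, (congrArg Subtype.val hc).symm⟩
  · have h2 : Module.finrank ℂ W.dualAnnihilator = 1 := by
      have := Subspace.finrank_add_finrank_dualAnnihilator_eq W
      rw [f3] at this
      lia
    obtain ⟨⟨f, hf⟩, hf0, hall⟩ := finrank_eq_one_iff'.mp h2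
    obtain ⟨w, hw⟩ : ∃ w : Fin 3 → ℂ, ∀ v, f v = w ⬝ᵥ v := by
      refine ⟨fun i => f (Pi.single i 1), fun v => ?_⟩
      have hv : v = v 0 • Pi.single 0 1 + v 1 • Pi.single 1 1 + v 2 • Pi.single 2 1 := by
        ext i; fin_cases i <;> simp
      conv_lhs => rw [hv]
      simp only [map_add, map_smul, dotProduct, Fin.sum_univ_three, smul_eq_mul]
      ring
    have hwR : ∀ γ, ∃ c : ℂ, (R (B γ : M2))ᵀ *ᵥ w = c • w := by
      intro γ
      obtain ⟨c, hc⟩ := hall ⟨f ∘ₗ Matrix.toLin' (R (B γ : M2)), by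
        rw [Submodule.mem_dualAnnihilator] at hf ⊢
        intro v hv
        exact hf _ (hW γ v hv)⟩
      refine ⟨c, ?_⟩
      have hc' : c • f = f ∘ₗ Matrix.toLin' (R (B γ : M2)) := congrArg Subtype.val hc
      apply dotProduct_eq
      intro v
      have := congrArg (fun f => f v) hc'
      simp [hw] at this
      rw [Matrix.mulVec_transpose, ← Matrix.dotProduct_mulVec, ← this, smul_dotProduct, smul_eq_mul]
    refine ⟨J' *ᵥ w, ?_, fun γ => ?_⟩
    · intro h
      have : w = 0 := by
        rw [← Matrix.one_mulVec w, ← J_J', ← Matrix.mulVec_mulVec, h, Matrix.mulVec_zero]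
      apply hf0
      apply Subtype.ext
      ext v
      simp [hw, this]
    · obtain ⟨c, hc⟩ := hwR γ⁻¹
      refine ⟨c, ?_⟩
      have e0 : R (B γ⁻¹ : M2) * R (B γ : M2) = 1 := by
        rw [← R_PR B hB, inv_mul_cancel, R_PR_one B hB]
      have e0' := mul_eq_one_comm.mp e0
      have e1 : J * R (B γ : M2) = (R (B γ⁻¹ : M2))ᵀ * J := by
        have := R_SL_J (B γ⁻¹)
        calc J * R (B γ : M2) = (R (B γ⁻¹ : M2))ᵀ * J * R (B γ⁻¹ : M2) * R (B γ : M2) := by rw [this]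
          _ = _ := by rw [Matrix.mul_assoc, e0, Matrix.mul_one]
      have e2 : R (B γ : M2) * J' = J' * (R (B γ⁻¹ : M2))ᵀ := by
        calc R (B γ : M2) * J' = J' * (J * R (B γ : M2)) * J' := by
              rw [← Matrix.mul_assoc J', J'_J, Matrix.one_mul]
          _ = _ := by rw [e1, Matrix.mul_assoc, Matrix.mul_assoc, J_J', Matrix.mul_one]
      rw [Matrix.mulVec_mulVec, e2, ← Matrix.mulVec_mulVec, hc, Matrix.mulVec_smul]

def Axis {Γ : Type*} [Group Γ] (B : Γ → SL) (N : M2) : Prop :=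
  N.trace = 0 ∧ N.det ≠ 0 ∧ ∀ γ, (B γ : M2) * N = N * (B γ : M2) ∨ (B γ : M2) * N = - (N * (B γ : M2))

theorem exists_axis {Γ : Type*} [Group Γ] (B : Γ → SL) (hB : PR B) (hI : Irr B)
    (hs : ¬ Function.Surjective (MonoidAlgebra.lift ℂ (Module.End ℂ (Fin 3 → ℂ)) Γ (rho3 B hB))) :
    ∃ N, Axis B N := by
  obtain ⟨u, hu, h⟩ := exists_fixed_line B hB hs
  have hX0 : X u ≠ 0 := by
    intro h; apply hu; apply X_inj; rw [h]; ext i j; fin_cases i <;> fin_cases j <;> simp [X]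
  have h1 : ∀ γ, ∃ c : ℂ, (B γ : M2) * X u = c • (X u * (B γ : M2)) := by
    intro γ
    obtain ⟨c, hc⟩ := h γ
    refine ⟨c, ?_⟩
    have := X_R (B γ : M2) u
    rw [hc, SL_det, one_smul] at this
    rw [← this, ← smul_mul_assoc]
    congr 1
    ext i j; fin_cases i <;> fin_cases j <;> simp [X]
  have hd : (X u).det ≠ 0 := by
    intro hd
    apply singular_red B hI (X u) hX0 hd
    intro γ
    obtain ⟨c, hc⟩ := h1 γ
    refine ⟨c, ?_, hc⟩
    rintro rfl
    apply hX0
    rw [zero_smul] at hc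
    have e : ((B γ)⁻¹ : SL).1 * (B γ).1 = 1 := by
      rw [← Matrix.SpecialLinearGroup.coe_mul]; simp
    calc X u = ((B γ)⁻¹ : SL).1 * (B γ).1 * X u := by rw [e, Matrix.one_mul]
      _ = 0 := by rw [Matrix.mul_assoc, hc, Matrix.mul_zero]
  refine ⟨X u, by simp [X, Matrix.trace], hd, fun γ => ?_⟩
  obtain ⟨c, hc⟩ := h1 γ
  have := congrArg Matrix.det hc
  rw [Matrix.det_smul, Matrix.det_mul, Matrix.det_mul, SL_det] at this
  have h2 : c ^ 2 = 1 := by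
    apply mul_right_cancel₀ hd
    simpa using this.symm
  rcases (mul_self_eq_one_iff (a := c)).mp (by rw [← pow_two]; exact h2) with h | h
  · left; rw [hc, h, one_smul]
  · right; rw [hc, h, neg_one_smul]

def Conj {Γ : Type*} [Group Γ] (B₁ B₂ : Γ → SL) : Prop :=
  ∃ C : SL, ∀ γ, pslProj (B₂ γ) = pslProj C * pslProj (B₁ γ) * (pslProj C)⁻¹

theorem conj_of_diag_eq {Γ : Type*} [Group Γ] (B₁ B₂ : Γ → SL) (h₁ : PR B₁) (h₂ : PR B₂)
    (H : Γ → Prop)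
    (d₁ : ∀ γ, H γ → B₁ γ 0 1 = 0 ∧ B₁ γ 1 0 = 0) (d₁' : ∀ γ, ¬ H γ → B₁ γ 0 0 = 0 ∧ B₁ γ 1 1 = 0)
    (d₂ : ∀ γ, H γ → B₂ γ 0 1 = 0 ∧ B₂ γ 1 0 = 0) (d₂' : ∀ γ, ¬ H γ → B₂ γ 0 0 = 0 ∧ B₂ γ 1 1 = 0)
    (Hm : ∀ γ δ, H (γ * δ) ↔ (H γ ↔ H δ)) (γ₀ : Γ) (hγ₀ : ¬ H γ₀)
    (hl : ∀ γ, H γ → (B₁ γ 0 0) ^ 2 = (B₂ γ 0 0) ^ 2) : Conj B₁ B₂ := by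
  have e₁ := SL_det (B₁ γ₀)
  have e₂ := SL_det (B₂ γ₀)
  rw [Matrix.det_fin_two, (d₁' γ₀ hγ₀).1] at e₁
  rw [Matrix.det_fin_two, (d₂' γ₀ hγ₀).1] at e₂
  have t₁ : B₁ γ₀ 0 1 ≠ 0 := by intro h; rw [h] at e₁; simp at e₁
  have t₂ : B₂ γ₀ 0 1 ≠ 0 := by intro h; rw [h] at e₂; simp at e₂
  obtain ⟨r, hr⟩ := IsAlgClosed.exists_pow_nat_eq (B₂ γ₀ 0 1 / B₁ γ₀ 0 1) (n := 2) (by norm_num)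
  have hr0 : r ≠ 0 := by
    rintro rfl
    have : B₂ γ₀ 0 1 / B₁ γ₀ 0 1 ≠ 0 := div_ne_zero t₂ t₁
    apply this; rw [← hr]; simp
  rw [eq_div_iff t₁] at hr
  let D : SL := ⟨!![r, 0; 0, r⁻¹], by simp [hr0]⟩
  have key : ∀ γ, (H γ ∨ γ = γ₀) →
      pslProj (B₂ γ) = pslProj D * pslProj (B₁ γ) * (pslProj D)⁻¹ := by
    intro γ hγ
    rw [eq_mul_inv_iff_mul_eq, ← map_mul, ← map_mul, proj_eq_iff]
    rcases hγ with hγ | rfl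
    · have E₁ := SL_det (B₁ γ)
      have E₂ := SL_det (B₂ γ)
      rw [Matrix.det_fin_two, (d₁ γ hγ).1] at E₁
      rw [Matrix.det_fin_two, (d₂ γ hγ).1] at E₂
      have hl' := hl γ hγ
      have z₁ : B₁ γ 0 0 ≠ 0 := by intro h; rw [h] at E₁; simp at E₁
      have z₂ : B₂ γ 0 0 ≠ 0 := by intro h; rw [h] at E₂; simp at E₂
      have E₁' : B₁ γ 1 1 = (B₁ γ 0 0)⁻¹ := by
        field_simp; linear_combination E₁
      have E₂' : B₂ γ 1 1 = (B₂ γ 0 0)⁻¹ := by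
        field_simp; linear_combination E₂
      refine ⟨B₂ γ 0 0 / B₁ γ 0 0, by rw [div_pow, hl']; field_simp, ?_⟩
      rw [Matrix.SpecialLinearGroup.coe_mul, Matrix.SpecialLinearGroup.coe_mul]
      ext i j; fin_cases i <;> fin_cases j <;>
        simp [D, Matrix.mul_apply, Matrix.vecMul, dotProduct, Fin.sum_univ_two, d₁ γ hγ, d₂ γ hγ, E₁', E₂']
      · field_simp
      · field_simp; exact hl'
    · refine ⟨1, by simp, ?_⟩
      rw [Matrix.SpecialLinearGroup.coe_mul, Matrix.SpecialLinearGroup.coe_mul]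
      ext i j; fin_cases i <;> fin_cases j <;>
        simp [D, Matrix.mul_apply, Matrix.vecMul, dotProduct, Fin.sum_univ_two, d₁' γ hγ₀, d₂' γ hγ₀]
      · field_simp; linear_combination -hr
      · field_simp
        apply mul_left_cancel₀ t₁
        linear_combination B₂ γ 1 0 * hr - e₂ + e₁
  refine ⟨D, fun γ => ?_⟩
  by_cases hγ : H γ
  · exact key γ (Or.inl hγ)
  · have k1 := key (γ * γ₀) (Or.inl (by rw [Hm]; tauto))
    have k2 := key γ₀ (Or.inr rfl)
    have m1 : pslProj (B₁ (γ * γ₀)) = pslProj (B₁ γ) * pslProj (B₁ γ₀) := (homOf B₁ h₁).map_mul _ _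
    have m2 : pslProj (B₂ (γ * γ₀)) = pslProj (B₂ γ) * pslProj (B₂ γ₀) := (homOf B₂ h₂).map_mul _ _
    rw [m1, m2, k2] at k1
    generalize pslProj (B₂ γ) = x at *
    generalize pslProj (B₁ γ) = y at *
    generalize pslProj (B₁ γ₀) = z at *
    generalize pslProj D = w at *
    have : x * (w * z * w⁻¹) = (w * y * w⁻¹) * (w * z * w⁻¹) := by rw [k1]; group
    exact mul_right_cancel this

theorem Conj.trans {Γ : Type*} [Group Γ] {B₁ B₂ B₃ : Γ → SL} (h : Conj B₁ B₂) (h' : Conj B₂ B₃) :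
    Conj B₁ B₃ := by
  obtain ⟨C, hC⟩ := h
  obtain ⟨C', hC'⟩ := h'
  refine ⟨C' * C, fun γ => ?_⟩
  rw [hC', hC, map_mul]; group

theorem Conj.symm {Γ : Type*} [Group Γ] {B₁ B₂ : Γ → SL} (h : Conj B₁ B₂) : Conj B₂ B₁ := by
  obtain ⟨C, hC⟩ := h
  refine ⟨C⁻¹, fun γ => ?_⟩
  rw [hC, map_inv]; group

theorem conj_self {Γ : Type*} [Group Γ] (B : Γ → SL) (P : SL) : Conj B (fun γ => P⁻¹ * B γ * P) :=
  ⟨P⁻¹, fun γ => by rw [map_mul, map_mul, map_inv]; group⟩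

theorem PR_conj {Γ : Type*} [Group Γ] (B : Γ → SL) (hB : PR B) (P : SL) :
    PR (fun γ => P⁻¹ * B γ * P) := by
  intro γ δ
  have h := (homOf B hB).map_mul γ δ
  have h' : pslProj (B (γ * δ)) = pslProj (B γ) * pslProj (B δ) := h
  have : pslProj (P⁻¹ * B (γ * δ) * P) = pslProj ((P⁻¹ * B γ * P) * (P⁻¹ * B δ * P)) := by
    simp only [map_mul, map_inv, h']; group
  simpa using (proj_eq_iff _ _).mp this

theorem conj_of_diag {Γ : Type*} [Group Γ] (B₁ B₂ : Γ → SL) (h₁ : PR B₁) (h₂ : PR B₂)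
    (H : Γ → Prop)
    (d₁ : ∀ γ, H γ → B₁ γ 0 1 = 0 ∧ B₁ γ 1 0 = 0) (d₁' : ∀ γ, ¬ H γ → B₁ γ 0 0 = 0 ∧ B₁ γ 1 1 = 0)
    (d₂ : ∀ γ, H γ → B₂ γ 0 1 = 0 ∧ B₂ γ 1 0 = 0) (d₂' : ∀ γ, ¬ H γ → B₂ γ 0 0 = 0 ∧ B₂ γ 1 1 = 0)
    (Hm : ∀ γ δ, H (γ * δ) ↔ (H γ ↔ H δ)) (γ₀ : Γ) (hγ₀ : ¬ H γ₀)
    (htr : ∀ γ, (B₁ γ : M2).trace ^ 2 = (B₂ γ : M2).trace ^ 2) : Conj B₁ B₂ := by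
  have dd : ∀ (B : Γ → SL), (∀ γ, H γ → B γ 0 1 = 0 ∧ B γ 1 0 = 0) → ∀ γ, H γ →
      B γ 0 0 * B γ 1 1 = 1 := by
    intro B hB γ hγ
    have := SL_det (B γ)
    rw [Matrix.det_fin_two, (hB γ hγ).1] at this
    simpa using this
  have mm : ∀ (B : Γ → SL), PR B → (∀ γ, H γ → B γ 0 1 = 0 ∧ B γ 1 0 = 0) → ∀ γ δ, H γ → H δ →
      (B (γ * δ) 0 0) ^ 2 = (B γ 0 0) ^ 2 * (B δ 0 0) ^ 2 := by
    intro B hB hd γ δ hγ hδ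
    obtain ⟨s, hs, e⟩ := hB γ δ
    have e' : B (γ * δ) 0 0 = s * (B γ 0 0 * B δ 0 0) := by
      have := congrFun (congrFun e 0) 0
      simpa [Matrix.mul_apply, Fin.sum_univ_two, hd γ hγ] using! this
    rw [e']; linear_combination (B γ 0 0 * B δ 0 0) ^ 2 * hs
  have alt : ∀ γ, H γ → (B₁ γ 0 0) ^ 2 = (B₂ γ 0 0) ^ 2 ∨ (B₁ γ 0 0) ^ 2 * (B₂ γ 0 0) ^ 2 = 1 := by
    intro γ hγ
    have t := htr γ
    have a := dd B₁ d₁ γ hγ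
    have b := dd B₂ d₂ γ hγ
    simp only [Matrix.trace_fin_two] at t
    generalize B₁ γ 0 0 = x at *
    generalize B₁ γ 1 1 = x' at *
    generalize B₂ γ 0 0 = y at *
    generalize B₂ γ 1 1 = y' at *
    have : (x ^ 2 - y ^ 2) * (x ^ 2 * y ^ 2 - 1) = 0 := by
      linear_combination x^2*y^2*t + (-2*x^2*y^2 - (x*x'+1)*y^2)*a + (2*x^2*y^2 + (y*y'+1)*x^2)*b
    rcases mul_eq_zero.mp this with h | h
    · left; linear_combination h
    · right; linear_combination h
  by_cases hall : ∀ γ, H γ → (B₁ γ 0 0) ^ 2 = (B₂ γ 0 0) ^ 2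
  · exact conj_of_diag_eq B₁ B₂ h₁ h₂ H d₁ d₁' d₂ d₂' Hm γ₀ hγ₀ hall
  · push Not at hall
    obtain ⟨γ, hγ, hne⟩ := hall
    have hall2 : ∀ δ, H δ → (B₁ δ 0 0) ^ 2 * (B₂ δ 0 0) ^ 2 = 1 := by
      intro δ hδ
      by_contra hc
      have p1 := (alt γ hγ).resolve_left hne
      have p2 := (alt δ hδ).resolve_right hc
      have q := alt (γ * δ) (by rw [Hm]; tauto)
      rw [mm B₁ h₁ d₁ γ δ hγ hδ, mm B₂ h₂ d₂ γ δ hγ hδ] at q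
      rcases q with q | q
      · apply hne
        have : (B₂ δ 0 0) ^ 2 ≠ 0 := by
          intro h0
          have b := dd B₂ d₂ δ hδ
          rw [pow_eq_zero_iff (by norm_num)] at h0
          rw [h0] at b; simp at b
        apply mul_right_cancel₀ this
        rw [p2] at q; exact q
      · apply hc
        linear_combination q - (B₁ δ 0 0) ^ 2 * (B₂ δ 0 0) ^ 2 * p1
    let W : SL := ⟨!![0, 1; -1, 0], by simp⟩
    have ent : ∀ γ, ((W⁻¹ * B₁ γ * W : SL) : M2) = !![B₁ γ 1 1, - B₁ γ 1 0; - B₁ γ 0 1, B₁ γ 0 0] := by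
      intro γ
      rw [Matrix.SpecialLinearGroup.coe_mul, Matrix.SpecialLinearGroup.coe_mul,
        Matrix.SpecialLinearGroup.coe_inv, Matrix.adjugate_fin_two]
      ext i j; fin_cases i <;> fin_cases j <;> simp [W, Matrix.mul_apply, Matrix.vecMul, dotProduct, Fin.sum_univ_two]
    refine (conj_self B₁ W).trans (conj_of_diag_eq _ B₂ (PR_conj B₁ h₁ W) h₂ H ?_ ?_ d₂ d₂' Hm γ₀ hγ₀ ?_)
    · intro γ hγ
      have := d₁ γ hγ
      rw [ent]; simp [this]
    · intro γ hγ
      have := d₁' γ hγ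
      rw [ent]; simp [this]
    · intro γ hγ
      have a := dd B₁ d₁ γ hγ
      have b := hall2 γ hγ
      rw [ent]; simp
      generalize B₁ γ 0 0 = x at *
      generalize B₁ γ 1 1 = x' at *
      generalize B₂ γ 0 0 = y at *
      linear_combination (-x'^2) * b + y^2*(x*x'+1) * a

theorem anti_trace (A N : M2) (hd : N.det ≠ 0) (h : A * N = - (N * A)) : A.trace = 0 := by
  have h1 : A.trace * N.det = - (A.trace * N.det) := by
    have e : A * N * N.adjugate = - (N * A) * N.adjugate := by rw [h]
    have := congrArg Matrix.trace e
    rw [Matrix.mul_assoc, Matrix.mul_adjugate, Matrix.neg_mul, Matrix.trace_neg, Matrix.mul_assoc,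
      Matrix.trace_mul_comm N, Matrix.mul_assoc, Matrix.adjugate_mul] at this
    simpa [mul_comm] using! this
  have h2 : A.trace * N.det = 0 := by linear_combination h1 / 2
  exact (mul_eq_zero.mp h2).resolve_right hd

theorem comm_traceless (A N : M2) (hd : N.det ≠ 0) (hN : N.trace = 0) (hA : A.trace = 0)
    (h : A * N = N * A) : ∃ k : ℂ, A = k • N := by
  have a1 : A 1 1 = - A 0 0 := by rw [Matrix.trace_fin_two] at hA; linear_combination hA
  have n1 : N 1 1 = - N 0 0 := by rw [Matrix.trace_fin_two] at hN; linear_combination hN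
  rw [Matrix.det_fin_two, n1] at hd
  have e0 := congrFun (congrFun h 0) 0
  have e1 := congrFun (congrFun h 0) 1
  have e2 := congrFun (congrFun h 1) 0
  simp only [Matrix.mul_apply, Fin.sum_univ_two, a1, n1] at e0 e1 e2
  have hd' : N 0 0 ^ 2 + N 0 1 * N 1 0 ≠ 0 := by
    intro h; apply hd; linear_combination -h
  refine ⟨(2 * A 0 0 * N 0 0 + A 0 1 * N 1 0 + A 1 0 * N 0 1) / (2 * (N 0 0 ^ 2 + N 0 1 * N 1 0)), ?_⟩
  have key : ∀ x y : ℂ, 2 * (N 0 0 ^ 2 + N 0 1 * N 1 0) * x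
      = (2 * A 0 0 * N 0 0 + A 0 1 * N 1 0 + A 1 0 * N 0 1) * y →
      x = (2 * A 0 0 * N 0 0 + A 0 1 * N 1 0 + A 1 0 * N 0 1) / (2 * (N 0 0 ^ 2 + N 0 1 * N 1 0)) * y := by
    intro x y hxy
    rw [div_mul_eq_mul_div, eq_div_iff (mul_ne_zero two_ne_zero hd')]
    linear_combination hxy
  ext i j
  rw [Matrix.smul_apply, smul_eq_mul]
  fin_cases i <;> fin_cases j <;> apply key <;> simp only [Fin.zero_eta, Fin.mk_one, Fin.isValue, a1, n1]
  · linear_combination N 1 0 / 2 * e1 - N 0 1 / 2 * e2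
  · linear_combination - N 0 0 * e1 + N 0 1 * e0
  · linear_combination N 0 0 * e2 - N 1 0 * e0
  · linear_combination - N 1 0 / 2 * e1 + N 0 1 / 2 * e2

/-- commuting with the axis -/
def Com {Γ : Type*} [Group Γ] (B : Γ → SL) (N : M2) (γ : Γ) : Prop :=
  (B γ : M2) * N = N * (B γ : M2)

theorem not_both (A : SL) (N : M2) (hd : N.det ≠ 0) (h : (A : M2) * N = N * (A : M2))
    (h' : (A : M2) * N = - (N * (A : M2))) : False := by
  have e : N * (A : M2) = 0 := by
    rw [h] at h'
    ext i j
    have := congrFun (congrFun h' i) j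
    simp only [Matrix.neg_apply] at this
    rw [Matrix.zero_apply]
    linear_combination this / 2
  have := congrArg Matrix.det e
  rw [Matrix.det_mul, SL_det] at this
  simp at this
  exact hd this

theorem Axis.anti {Γ : Type*} [Group Γ] {B : Γ → SL} {N : M2} (h : Axis B N) {γ : Γ}
    (hγ : ¬ Com B N γ) : (B γ : M2) * N = - (N * (B γ : M2)) :=
  (h.2.2 γ).resolve_left hγ

theorem Axis.tr {Γ : Type*} [Group Γ] {B : Γ → SL} {N : M2} (h : Axis B N) {γ : Γ}
    (hγ : ¬ Com B N γ) : (B γ : M2).trace = 0 := anti_trace _ _ h.2.1 (h.anti hγ)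

theorem Axis.not_com {Γ : Type*} [Group Γ] {B : Γ → SL} {N : M2} (h : Axis B N) {γ : Γ}
    (hγ : (B γ : M2) * N = - (N * (B γ : M2))) : ¬ Com B N γ :=
  fun hc => not_both _ _ h.2.1 hc hγ

theorem Com_mul {Γ : Type*} [Group Γ] {B : Γ → SL} {N : M2} (hB : PR B) (h : Axis B N) (γ δ : Γ) :
    Com B N (γ * δ) ↔ (Com B N γ ↔ Com B N δ) := by
  obtain ⟨s, hs, e⟩ := hB γ δ
  have key : ∀ a b : ℂ, (B γ : M2) * N = a • (N * (B γ : M2)) → (B δ : M2) * N = b • (N * (B δ : M2)) →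
      (B (γ * δ) : M2) * N = (a * b) • (N * (B (γ * δ) : M2)) := by
    intro a b ha hb
    rw [e, Matrix.smul_mul, Matrix.mul_assoc, hb, Matrix.mul_smul, ← Matrix.mul_assoc, ha,
      Matrix.smul_mul, Matrix.mul_smul, Matrix.mul_assoc]
    simp only [smul_smul]
    congr 1; ring
  by_cases c1 : Com B N γ <;> by_cases c2 : Com B N δ <;> simp only [c1, c2, iff_true, true_iff, iff_false, not_true, not_false_iff]
  · have := key 1 1 (by rw [one_smul]; exact c1) (by rw [one_smul]; exact c2)
    simpa [Com] using! this
  · have := key 1 (-1) (by rw [one_smul]; exact c1) (by rw [neg_one_smul]; exact h.anti c2)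
    apply h.not_com; simpa using! this
  · have := key (-1) 1 (by rw [neg_one_smul]; exact h.anti c1) (by rw [one_smul]; exact c2)
    apply h.not_com; simpa using! this
  · have := key (-1) (-1) (by rw [neg_one_smul]; exact h.anti c1) (by rw [neg_one_smul]; exact h.anti c2)
    simpa [Com] using! this

theorem axis_not_all {Γ : Type*} [Group Γ] {B : Γ → SL} {N : M2} (hI : Irr B) (h : Axis B N) :
    ∃ γ, ¬ Com B N γ := by
  by_contra hc
  push Not at hc
  obtain ⟨m, hm⟩ := IsAlgClosed.exists_pow_nat_eq (-N.det) (n := 2) (by norm_num)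
  have n1 : N 1 1 = - N 0 0 := by have := h.1; rw [Matrix.trace_fin_two] at this; linear_combination this
  rw [Matrix.det_fin_two] at hm
  refine singular_red B hI (N - m • 1) ?_ ?_ ?_
  · intro h0
    have e : N = m • 1 := sub_eq_zero.mp h0
    have t := h.1
    have d := h.2.1
    rw [e] at t d
    simp [Matrix.trace_fin_two] at t
    have : m = 0 := t
    apply d; rw [this]; simp
  · rw [Matrix.det_fin_two]
    simp
    rw [n1] at hm ⊢
    linear_combination hm
  · intro γ
    refine ⟨1, one_ne_zero, ?_⟩
    rw [one_smul, Matrix.mul_sub, Matrix.sub_mul, hc γ]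
    simp

theorem diagonalize (N : M2) (ht : N.trace = 0) (hd : N.det ≠ 0) :
    ∃ (P : SL) (m : ℂ), m ≠ 0 ∧ N * (P : M2) = (P : M2) * !![m, 0; 0, -m] := by
  have n1 : N 1 1 = - N 0 0 := by rw [Matrix.trace_fin_two] at ht; linear_combination ht
  rw [Matrix.det_fin_two, n1] at hd
  obtain ⟨m, hm⟩ := IsAlgClosed.exists_pow_nat_eq (N 0 0 ^ 2 + N 0 1 * N 1 0) (n := 2) (by norm_num)
  have hm0 : m ≠ 0 := by
    rintro rfl; apply hd; linear_combination hm
  have main : ∀ a b c d k : ℂ, k ≠ 0 → a ^ 2 + b ^ 2 = a ^ 2 + b ^ 2 → a * d - b * c ≠ 0 →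
      N * !![a, b; c, d] = !![a, b; c, d] * !![k, 0; 0, -k] →
      ∃ (P : SL) (m : ℂ), m ≠ 0 ∧ N * (P : M2) = (P : M2) * !![m, 0; 0, -m] := by
    intro a b c d k hk _ hD e
    refine ⟨⟨!![a / (a * d - b * c), b; c / (a * d - b * c), d], ?_⟩, k, hk, ?_⟩
    · rw [Matrix.det_fin_two]; simp; field_simp
    · have e0 := congrFun (congrFun e 0) 0
      have e1 := congrFun (congrFun e 0) 1
      have e2 := congrFun (congrFun e 1) 0
      have e3 := congrFun (congrFun e 1) 1
      simp [Matrix.mul_apply, Fin.sum_univ_two] at e0 e1 e2 e3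
      ext i j; fin_cases i <;> fin_cases j <;> simp [Matrix.mul_apply, Fin.sum_univ_two]
      · linear_combination e0 / (a * d - b * c)
      · linear_combination e1
      · linear_combination e2 / (a * d - b * c)
      · linear_combination e3
  by_cases hq : N 0 1 = 0
  · by_cases hr : N 1 0 = 0
    · have : N 0 0 ≠ 0 := by intro h; apply hd; rw [h, hq]; simp
      refine main 1 0 0 1 (N 0 0) this rfl (by simp) ?_
      ext i j; fin_cases i <;> fin_cases j <;> simp [Matrix.mul_apply, Fin.sum_univ_two, hq, hr, n1]
    · refine main (N 0 0 + m) (N 0 0 - m) (N 1 0) (N 1 0) m hm0 rfl ?_ ?_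
      · have : (N 0 0 + m) * N 1 0 - (N 0 0 - m) * N 1 0 = 2 * m * N 1 0 := by ring
        rw [this]; exact mul_ne_zero (mul_ne_zero two_ne_zero hm0) hr
      · ext i j; fin_cases i <;> fin_cases j <;> simp [Matrix.mul_apply, Fin.sum_univ_two, n1]
        · linear_combination - hm
        · linear_combination - hm
        · ring
        · ring
  · refine main (N 0 1) (N 0 1) (m - N 0 0) (-m - N 0 0) m hm0 rfl ?_ ?_
    · have : N 0 1 * (-m - N 0 0) - N 0 1 * (m - N 0 0) = -2 * m * N 0 1 := by ring
      rw [this]; exact mul_ne_zero (mul_ne_zero (by norm_num) hm0) hq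
    · ext i j; fin_cases i <;> fin_cases j <;> simp [Matrix.mul_apply, Fin.sum_univ_two, n1]
      · ring
      · ring
      · linear_combination - hm
      · linear_combination - hm

theorem axis_diag {Γ : Type*} [Group Γ] {B : Γ → SL} {N : M2} (h : Axis B N) :
    ∃ P : SL, (∀ γ, Com B N γ → (P⁻¹ * B γ * P) 0 1 = 0 ∧ (P⁻¹ * B γ * P) 1 0 = 0) ∧
      (∀ γ, ¬ Com B N γ → (P⁻¹ * B γ * P) 0 0 = 0 ∧ (P⁻¹ * B γ * P) 1 1 = 0) := by
  obtain ⟨P, m, hm, e⟩ := diagonalize N h.1 h.2.1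
  have i1 : (P : M2) * ((P⁻¹ : SL) : M2) = 1 := by
    rw [← Matrix.SpecialLinearGroup.coe_mul]; simp
  have i2 : ((P⁻¹ : SL) : M2) * (P : M2) = 1 := by
    rw [← Matrix.SpecialLinearGroup.coe_mul]; simp
  have e' : ((P⁻¹ : SL) : M2) * N = !![m, 0; 0, -m] * ((P⁻¹ : SL) : M2) := by
    calc ((P⁻¹ : SL) : M2) * N = ((P⁻¹ : SL) : M2) * (N * (P : M2)) * ((P⁻¹ : SL) : M2) := by
          rw [Matrix.mul_assoc, Matrix.mul_assoc, i1, Matrix.mul_one]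
      _ = _ := by rw [e, ← Matrix.mul_assoc, i2, Matrix.one_mul]
  have key : ∀ γ (s : ℂ), (B γ : M2) * N = s • (N * (B γ : M2)) →
      ((P⁻¹ * B γ * P : SL) : M2) * !![m, 0; 0, -m] = s • (!![m, 0; 0, -m] * ((P⁻¹ * B γ * P : SL) : M2)) := by
    intro γ s hs
    rw [Matrix.SpecialLinearGroup.coe_mul, Matrix.SpecialLinearGroup.coe_mul]
    rw [Matrix.mul_assoc, ← e, ← Matrix.mul_assoc, Matrix.mul_assoc _ (B γ : M2) N, hs,
      Matrix.mul_smul, ← Matrix.mul_assoc, e', Matrix.smul_mul]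
    simp only [Matrix.mul_assoc]
  refine ⟨P, fun γ hγ => ?_, fun γ hγ => ?_⟩
  · have k := key γ 1 (by rw [one_smul]; exact hγ)
    generalize P⁻¹ * B γ * P = Q at k
    have k1 := congrFun (congrFun k 0) 1
    have k2 := congrFun (congrFun k 1) 0
    simp [Matrix.mul_apply, Fin.sum_univ_two, Matrix.vecMul, dotProduct] at k1 k2
    constructor
    · apply mul_left_cancel₀ hm; linear_combination - k1 / 2
    · apply mul_left_cancel₀ hm; linear_combination k2 / 2
  · have k := key γ (-1) (by rw [neg_one_smul]; exact h.anti hγ)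
    generalize P⁻¹ * B γ * P = Q at k
    have k1 := congrFun (congrFun k 0) 0
    have k2 := congrFun (congrFun k 1) 1
    simp [Matrix.mul_apply, Fin.sum_univ_two, Matrix.vecMul, dotProduct] at k1 k2
    constructor
    · apply mul_left_cancel₀ hm; linear_combination k1 / 2
    · apply mul_left_cancel₀ hm; linear_combination - k2 / 2

theorem trace_conj (A P : SL) : ((P⁻¹ * A * P : SL) : M2).trace = (A : M2).trace := by
  rw [Matrix.SpecialLinearGroup.coe_mul, Matrix.trace_mul_comm, ← Matrix.SpecialLinearGroup.coe_mul]
  rw [mul_inv_cancel_left]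

theorem conj_of_axes {Γ : Type*} [Group Γ] {B₁ B₂ : Γ → SL} {N₁ N₂ : M2} (p₁ : PR B₁) (p₂ : PR B₂)
    (a₁ : Axis B₁ N₁) (a₂ : Axis B₂ N₂) (hc : ∀ γ, Com B₁ N₁ γ ↔ Com B₂ N₂ γ)
    (hI : ∃ γ, ¬ Com B₁ N₁ γ)
    (htr : ∀ γ, (B₁ γ : M2).trace ^ 2 = (B₂ γ : M2).trace ^ 2) : Conj B₁ B₂ := by
  obtain ⟨γ₀, hγ₀⟩ := hI
  obtain ⟨P, hP, hP'⟩ := axis_diag a₁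
  obtain ⟨Q, hQ, hQ'⟩ := axis_diag a₂
  have := conj_of_diag (fun γ => P⁻¹ * B₁ γ * P) (fun γ => Q⁻¹ * B₂ γ * Q) (PR_conj _ p₁ P) (PR_conj _ p₂ Q)
    (Com B₁ N₁) hP hP' (fun γ h => hQ γ ((hc γ).mp h)) (fun γ h => hQ' γ (fun h' => h ((hc γ).mpr h')))
    (Com_mul p₁ a₁) γ₀ hγ₀ (by intro γ; simp only [trace_conj]; exact htr γ)
  exact (conj_self B₁ P).trans (this.trans (conj_self B₂ Q).symm)

theorem Com_inv {Γ : Type*} [Group Γ] {B : Γ → SL} {N : M2} (hB : PR B) (h : Axis B N) (γ : Γ) :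
    Com B N γ⁻¹ ↔ Com B N γ := by
  have h1 : Com B N 1 := by
    have := Com_mul hB h 1 1
    rw [mul_one] at this; tauto
  have := Com_mul hB h γ⁻¹ γ
  rw [inv_mul_cancel] at this; tauto

theorem axis_align {Γ : Type*} [Group Γ] {B₁ B₂ : Γ → SL} {N₁ N₂ : M2} (p₁ : PR B₁) (p₂ : PR B₂)
    (a₁ : Axis B₁ N₁) (a₂ : Axis B₂ N₂) (i₁ : ∃ γ, ¬ Com B₁ N₁ γ) (i₂ : ∃ γ, ¬ Com B₂ N₂ γ)
    (htr : ∀ γ, (B₁ γ : M2).trace ^ 2 = (B₂ γ : M2).trace ^ 2) :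
    ∃ N, Axis B₁ N ∧ ∀ γ, Com B₁ N γ ↔ Com B₂ N₂ γ := by
  by_cases hall : ∀ γ, Com B₁ N₁ γ ↔ Com B₂ N₂ γ
  · exact ⟨N₁, a₁, hall⟩
  have m₁ := Com_mul p₁ a₁
  have m₂ := Com_mul p₂ a₂
  have v₁ := Com_inv p₁ a₁
  have v₂ := Com_inv p₂ a₂
  obtain ⟨g, hg⟩ := not_forall.mp hall
  obtain ⟨x, hx⟩ := i₁
  obtain ⟨y, hy⟩ := i₂
  obtain ⟨a, ha1, ha2⟩ : ∃ a, Com B₁ N₁ a ∧ ¬ Com B₂ N₂ a := by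
    by_contra hcon
    push Not at hcon
    have c1 := hcon g
    have c2 := hcon y
    have c3 := hcon (g * y)
    rw [m₁, m₂] at c3
    tauto
  obtain ⟨b, hb1, hb2⟩ : ∃ b, ¬ Com B₁ N₁ b ∧ Com B₂ N₂ b := by
    by_contra hcon
    push Not at hcon
    have c1 := hcon g
    have c2 := hcon x
    have c3 := hcon (g * x)
    rw [m₁, m₂] at c3
    tauto
  have tr0 : ∀ γ, ¬ Com B₂ N₂ γ → (B₁ γ : M2).trace = 0 := by
    intro γ hγ
    have := htr γ
    rw [a₂.tr hγ] at this
    simpa using this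
  have kN : ∀ γ, Com B₁ N₁ γ → ¬ Com B₂ N₂ γ → ∃ k : ℂ, (B₁ γ : M2) = k • N₁ :=
    fun γ h h' => comm_traceless _ _ a₁.2.1 a₁.1 (tr0 γ h') h
  have hbN := a₁.anti hb1
  have comA : ∀ γ, Com B₁ N₁ γ → ¬ Com B₂ N₂ γ →
      (B₁ γ : M2) * (B₁ b : M2) = - ((B₁ b : M2) * (B₁ γ : M2)) := by
    intro γ h h'
    obtain ⟨k, hk⟩ := kN γ h h'
    rw [hk, Matrix.mul_smul, hbN, Matrix.smul_mul, smul_neg, neg_neg]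
  have prod : ∀ γ δ : Γ, ∀ c d : ℂ, (B₁ γ : M2) * (B₁ b : M2) = c • ((B₁ b : M2) * (B₁ γ : M2)) →
      (B₁ δ : M2) * (B₁ b : M2) = d • ((B₁ b : M2) * (B₁ δ : M2)) →
      (B₁ (γ * δ) : M2) * (B₁ b : M2) = (c * d) • ((B₁ b : M2) * (B₁ (γ * δ) : M2)) := by
    intro γ δ c d hc hd
    obtain ⟨s, hs, e⟩ := p₁ γ δ
    rw [e, Matrix.smul_mul, Matrix.mul_assoc, hd, Matrix.mul_smul, ← Matrix.mul_assoc, hc,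
      Matrix.smul_mul, Matrix.mul_smul, Matrix.mul_assoc]
    simp only [smul_smul]
    congr 1; ring
  have com1 : ∀ γ, Com B₁ N₁ γ → Com B₂ N₂ γ →
      (B₁ γ : M2) * (B₁ b : M2) = (B₁ b : M2) * (B₁ γ : M2) := by
    intro γ h h'
    have q1 := comA (a * γ) (by rw [m₁]; tauto) (by rw [m₂]; tauto)
    have q2 := comA a⁻¹ (by rw [v₁]; tauto) (by rw [v₂]; tauto)
    have := prod a⁻¹ (a * γ) (-1) (-1) (by rw [neg_one_smul]; exact q2) (by rw [neg_one_smul]; exact q1)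
    simpa using! this
  have com2 : ∀ γ, ¬ Com B₁ N₁ γ → Com B₂ N₂ γ →
      (B₁ γ : M2) * (B₁ b : M2) = (B₁ b : M2) * (B₁ γ : M2) := by
    intro γ h h'
    have q1 := com1 (b⁻¹ * γ) (by rw [m₁, v₁]; tauto) (by rw [m₂, v₂]; tauto)
    have := prod b (b⁻¹ * γ) 1 1 (by rw [one_smul]) (by rw [one_smul]; exact q1)
    simpa using! this
  have comB : ∀ γ, ¬ Com B₁ N₁ γ → ¬ Com B₂ N₂ γ →
      (B₁ γ : M2) * (B₁ b : M2) = - ((B₁ b : M2) * (B₁ γ : M2)) := by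
    intro γ h h'
    have q1 := com2 (a⁻¹ * γ) (by rw [m₁, v₁]; tauto) (by rw [m₂, v₂]; tauto)
    have := prod a (a⁻¹ * γ) (-1) 1 (by rw [neg_one_smul]; exact comA a ha1 ha2) (by rw [one_smul]; exact q1)
    simpa using! this
  have pos : ∀ γ, Com B₂ N₂ γ → (B₁ γ : M2) * (B₁ b : M2) = (B₁ b : M2) * (B₁ γ : M2) := by
    intro γ h
    by_cases h' : Com B₁ N₁ γ
    · exact com1 γ h' h
    · exact com2 γ h' h
  have neg : ∀ γ, ¬ Com B₂ N₂ γ → (B₁ γ : M2) * (B₁ b : M2) = - ((B₁ b : M2) * (B₁ γ : M2)) := by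
    intro γ h
    by_cases h' : Com B₁ N₁ γ
    · exact comA γ h' h
    · exact comB γ h' h
  have ax : Axis B₁ (B₁ b : M2) := by
    refine ⟨a₁.tr hb1, by rw [SL_det]; exact one_ne_zero, fun γ => ?_⟩
    by_cases h : Com B₂ N₂ γ
    · exact Or.inl (pos γ h)
    · exact Or.inr (neg γ h)
  refine ⟨_, ax, fun γ => ⟨fun h => ?_, fun h => pos γ h⟩⟩
  by_contra h'
  exact ax.not_com (neg γ h') h

theorem rho3_trace {Γ : Type*} [Group Γ] (B : Γ → SL) (hB : PR B) (γ : Γ) :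
    LinearMap.trace ℂ (Fin 3 → ℂ) (rho3 B hB γ) = (B γ : M2).trace ^ 2 - 1 := by
  have : rho3 B hB γ = Matrix.toLin' (R (B γ : M2)) := rfl
  rw [this, Matrix.trace_toLin'_eq, R_trace, SL_det]

theorem main_lift {Γ : Type*} [Group Γ] (B₁ B₂ : Γ → SL) (p₁ : PR B₁) (p₂ : PR B₂)
    (i₁ : Irr B₁) (i₂ : Irr B₂)
    (htr : ∀ γ, (B₁ γ : M2).trace ^ 2 = (B₂ γ : M2).trace ^ 2) : Conj B₁ B₂ := by
  have t3 : ∀ γ, LinearMap.trace ℂ (Fin 3 → ℂ) (rho3 B₁ p₁ γ)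
      = LinearMap.trace ℂ (Fin 3 → ℂ) (rho3 B₂ p₂ γ) := by
    intro γ; rw [rho3_trace, rho3_trace, htr]
  by_cases hs : Function.Surjective (MonoidAlgebra.lift ℂ (Module.End ℂ (Fin 3 → ℂ)) Γ (rho3 B₁ p₁))
  · obtain ⟨_, T, hT⟩ := conj_of_surj (rho3 B₁ p₁) (rho3 B₂ p₂) t3 hs
    obtain ⟨C, hC⟩ := case1 B₁ B₂ p₁ p₂ T hT hs
    refine ⟨C, fun γ => ?_⟩
    rw [eq_mul_inv_iff_mul_eq, ← map_mul, ← map_mul, proj_eq_iff]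
    simpa using hC γ
  · have hs2 : ¬ Function.Surjective
        (MonoidAlgebra.lift ℂ (Module.End ℂ (Fin 3 → ℂ)) Γ (rho3 B₂ p₂)) := by
      intro h
      exact hs (conj_of_surj (rho3 B₂ p₂) (rho3 B₁ p₁) (fun γ => (t3 γ).symm) h).1
    obtain ⟨N₁, a₁⟩ := exists_axis B₁ p₁ i₁ hs
    obtain ⟨N₂, a₂⟩ := exists_axis B₂ p₂ i₂ hs2
    obtain ⟨N, a, hN⟩ := axis_align p₁ p₂ a₁ a₂ (axis_not_all i₁ a₁) (axis_not_all i₂ a₂) htr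
    exact conj_of_axes p₁ p₂ a a₂ hN (axis_not_all i₁ a) htr

theorem exists_lift {Γ : Type*} [Group Γ] (ρ : Γ →* PSL2) (h : IsIrreduciblePSL ρ) :
    ∃ B : Γ → SL, (∀ γ, pslProj (B γ) = ρ γ) ∧ PR B ∧ Irr B := by
  choose B hB using fun γ => QuotientGroup.mk'_surjective
    (Subgroup.center (SpecialLinearGroup (Fin 2) ℂ)) (ρ γ)
  refine ⟨B, hB, fun γ δ => ?_, ?_⟩
  · have : pslProj (B (γ * δ)) = pslProj (B γ * B δ) := by
      rw [map_mul]; simp only [pslProj, hB, map_mul]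
    simpa using (proj_eq_iff _ _).mp this
  · rintro ⟨v, hv, hc⟩
    refine h ⟨v, hv, fun γ A hA => ?_⟩
    have : pslProj A = pslProj (B γ) := by rw [hA]; exact (hB γ).symm
    obtain ⟨s, _, e⟩ := (proj_eq_iff _ _).mp this
    obtain ⟨c, hc⟩ := hc γ
    refine ⟨s * c, ?_⟩
    rw [e, Matrix.smul_mulVec, hc, smul_smul]

end PSLaux

/-- Two irreducible representations of a finitely generated group `Γ` in `PSL(2,ℂ)`
with the same character (squared trace of any lifts) are conjugate. -/
theorem irreducible_same_character_conjugate
    {Γ : Type*} [Group Γ] (hfg : Group.FG Γ)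
    (ρ₁ ρ₂ : Γ →* PSL2)
    (h₁ : IsIrreduciblePSL ρ₁) (h₂ : IsIrreduciblePSL ρ₂)
    (hchar : ∀ γ : Γ, ∀ A₁ A₂ : SpecialLinearGroup (Fin 2) ℂ,
      pslProj A₁ = ρ₁ γ → pslProj A₂ = ρ₂ γ →
      (Matrix.trace (A₁ : Matrix (Fin 2) (Fin 2) ℂ)) ^ 2
        = (Matrix.trace (A₂ : Matrix (Fin 2) (Fin 2) ℂ)) ^ 2) :
    ∃ C : SpecialLinearGroup (Fin 2) ℂ, ∀ γ : Γ,
      ρ₂ γ = pslProj C * ρ₁ γ * (pslProj C)⁻¹ := by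
  obtain ⟨B₁, l₁, p₁, i₁⟩ := PSLaux.exists_lift ρ₁ h₁
  obtain ⟨B₂, l₂, p₂, i₂⟩ := PSLaux.exists_lift ρ₂ h₂
  obtain ⟨C, hC⟩ := PSLaux.main_lift B₁ B₂ p₁ p₂ i₁ i₂
    (fun γ => hchar γ _ _ (l₁ γ) (l₂ γ))
  refine ⟨C, fun γ => ?_⟩
  rw [← l₁, ← l₂]
  exact hC γ
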